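/- arXiv:1906.10454 — 2 statements merged into one kernel-verified Lean document; each statement's English description precedes it below -/
import Mathlib

section
/- Let T ≥ 3 and K ≥ 1 be real numbers and α ∈ (0,1/2). Set λ := max( √(K log T / T), T^{-α} √(log T) ). Then λ > 0 and K log T / λ + λ^{(α−1)/α} (log T)^{1/(2α)} + λ T ≤ 3 ( √(TK) · log T + T^{1−α} (log T)^{1/(2α)} ). -/
/-!
Write `L = log T ≥ 1`, `a = √(K L / T)`, `b = T^{-α} √L` and `λ = max a b`. The first two terms are
decreasing in `λ`, so they can be evaluated at `a` and at `b` respectively: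
`K L / a = √(TK) √L` and `b^{(α-1)/α} = T^{1-α} (√L)^{(α-1)/α} ≤ T^{1-α}`. For the last term,
`λ T ≤ a T + b T = √(TK) √L + T^{1-α} √L`. Since `L ≥ 1` and `1/2 ≤ 1/(2α)`, one has `√L ≤ L` and
`√L ≤ L^{1/(2α)}`, so the sum is at most twice the bracket on the right-hand side.
-/

/-- Optimization over the threshold `λ` in the proof of the problem-independent upper
bound (Theorem 4): with `λ = max(√(K log T / T), T^{-α} √(log T))`, the slow-mixing
regret bound `K log T / λ + λ^{(α−1)/α} (log T)^{1/(2α)} + λ T` is at most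
`3 (√(TK) log T + T^{1−α} (log T)^{1/(2α)})`. -/
theorem threshold_optimization
    (T K α : ℝ) (hT : 3 ≤ T) (hK : 1 ≤ K) (hα : α ∈ Set.Ioo (0 : ℝ) (1 / 2)) :
    0 < max (Real.sqrt (K * Real.log T / T)) (T ^ (-α) * Real.sqrt (Real.log T)) ∧
    K * Real.log T / max (Real.sqrt (K * Real.log T / T)) (T ^ (-α) * Real.sqrt (Real.log T))
        + (max (Real.sqrt (K * Real.log T / T)) (T ^ (-α) * Real.sqrt (Real.log T)))
            ^ ((α - 1) / α) * Real.log T ^ (1 / (2 * α))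
        + max (Real.sqrt (K * Real.log T / T)) (T ^ (-α) * Real.sqrt (Real.log T)) * T
      ≤ 3 * (Real.sqrt (T * K) * Real.log T + T ^ (1 - α) * Real.log T ^ (1 / (2 * α))) := by
  obtain ⟨hα0, hα1⟩ := hα
  have hT0 : 0 < T := by linarith
  have hK0 : 0 < K := by linarith
  have hL : 1 ≤ Real.log T := by
    rw [Real.le_log_iff_exp_le hT0]
    linarith [Real.exp_one_lt_d9]
  set L := Real.log T
  have hL0 : 0 < L := by linarith
  set a := Real.sqrt (K * L / T) with ha
  set b := T ^ (-α) * Real.sqrt L with hb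
  have ha0 : 0 < a := Real.sqrt_pos.2 (by positivity)
  have hb0 : 0 < b := by positivity
  have hm0 : 0 < max a b := lt_max_of_lt_left ha0
  refine ⟨hm0, ?_⟩
  have hs1 : 1 ≤ Real.sqrt L := Real.one_le_sqrt.2 hL
  have hsL : Real.sqrt L ≤ L := by
    nlinarith [Real.mul_self_sqrt hL0.le]
  have hsp : Real.sqrt L ≤ L ^ (1 / (2 * α)) := by
    rw [Real.sqrt_eq_rpow]
    apply Real.rpow_le_rpow_of_exponent_le hL
    apply one_div_le_one_div_of_le <;> linarith
  have haT : a * T = Real.sqrt (T * K) * Real.sqrt L := by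
    rw [ha, ← Real.sqrt_mul (by positivity)]
    nth_rewrite 2 [← Real.sqrt_sq hT0.le]
    rw [← Real.sqrt_mul (by positivity)]
    congr 1
    field_simp
  have haT_le : a * T ≤ Real.sqrt (T * K) * L := by
    rw [haT]
    gcongr
  have hbT : b * T ≤ T ^ (1 - α) * L ^ (1 / (2 * α)) := by
    have h : b * T = T ^ (1 - α) * Real.sqrt L := by
      rw [hb, show 1 - α = -α + 1 by ring, Real.rpow_add_one hT0.ne']
      ring
    rw [h]
    gcongr
  have h1 : K * L / max a b ≤ a * T := by
    have haa : a * a = K * L / T := Real.mul_self_sqrt (by positivity)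
    have hKL : K * L = a * T * a := by
      rw [mul_right_comm, haa]
      field_simp
    rw [div_le_iff₀ hm0, hKL]
    gcongr
    exact le_max_left _ _
  have hexp : (α - 1) / α ≤ 0 := div_nonpos_of_nonpos_of_nonneg (by linarith) hα0.le
  have h2 : (max a b) ^ ((α - 1) / α) ≤ T ^ (1 - α) := by
    calc (max a b) ^ ((α - 1) / α) ≤ b ^ ((α - 1) / α) :=
          Real.rpow_le_rpow_of_nonpos hb0 (le_max_right _ _) hexp
      _ = T ^ (1 - α) * Real.sqrt L ^ ((α - 1) / α) := by
          rw [hb, Real.mul_rpow (by positivity) (by positivity), ← Real.rpow_mul hT0.le]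
          congr 2
          field_simp
          ring
      _ ≤ T ^ (1 - α) * 1 := by
          gcongr
          exact Real.rpow_le_one_of_one_le_of_nonpos hs1 hexp
      _ = T ^ (1 - α) := mul_one _
  have h2' : (max a b) ^ ((α - 1) / α) * L ^ (1 / (2 * α)) ≤ T ^ (1 - α) * L ^ (1 / (2 * α)) := by
    gcongr
  have h3 : max a b * T ≤ a * T + b * T := by
    rw [← add_mul]
    gcongr
    exact max_le_add_of_nonneg ha0.le hb0.le
  have hX : 0 ≤ Real.sqrt (T * K) * L := by positivity
  have hY : 0 ≤ T ^ (1 - α) * L ^ (1 / (2 * α)) := by positivity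
  linarith
end

section
/- Let α ∈ (0,1/2), θ ∈ (0,1], and A, T > 0 with A T θ² ≥ 32. Then (θ/2)^{1−1/α} · (log(A T (θ/2)²))^{1/(2α)} ≥ (1/2) · (12/5)^{1/(2α)} · θ^{1−1/α} · (log(A T θ²))^{1/(2α)}, and in particular the left-hand side is strictly greater than θ^{1−1/α} (log(A T θ²))^{1/(2α)} since (1/2)(12/5)^{1/(2α)} > 6/5 > 1. -/
/-!
With `p = 1/(2α) > 1`, halving `θ` multiplies `θ^{1-2p}` by exactly `(1/2) * 4^p`. Since
`log (x/4) = log x - 2 log 2` and `log x ≥ 5 log 2` for `x ≥ 32`, the logarithm shrinks by a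
factor of at least `3/5`. Together the ratio is at least `(1/2) * (4 * 3/5)^p = (1/2) * (12/5)^p`,
which exceeds `(1/2) * (12/5) = 6/5` because `p > 1`.
-/

theorem three_fifths_log_le_log_div_four {x : ℝ} (hx : 32 ≤ x) :
    3 / 5 * Real.log x ≤ Real.log (x / 4) := by
  have h5 : 5 * Real.log 2 ≤ Real.log x := by
    have h := Real.log_le_log (by norm_num) hx
    rw [show (32 : ℝ) = 2 ^ 5 by norm_num, Real.log_pow] at h
    exact_mod_cast h
  rw [Real.log_div (by linarith) (by norm_num), show (4 : ℝ) = 2 ^ 2 by norm_num, Real.log_pow]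
  push_cast
  linarith

theorem half_rpow_one_sub_two_mul {θ : ℝ} (hθ : 0 < θ) (p : ℝ) :
    (θ / 2) ^ (1 - 2 * p) = 1 / 2 * (4 : ℝ) ^ p * θ ^ (1 - 2 * p) := by
  have h2 : (2 : ℝ) ^ (1 - 2 * p) = 2 / 4 ^ p := by
    rw [Real.rpow_sub (by norm_num), Real.rpow_one, Real.rpow_mul (by norm_num)]
    norm_num
  have h4 : (0 : ℝ) < 4 ^ p := by positivity
  rw [Real.div_rpow hθ.le (by norm_num), h2]
  field_simp

/-- Geometric growth of the per-epoch penalty `q(θ) = θ^{1−1/α} (log(A T θ²))^{1/(2α)}`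
along the dyadic accuracy levels, in the regime `A T θ² ≥ 32` (proof of Theorem 3). -/
theorem epoch_penalty_geometric_growth
    (α θ A T : ℝ) (hα : α ∈ Set.Ioo (0 : ℝ) (1 / 2)) (hθ : θ ∈ Set.Ioc (0 : ℝ) 1)
    (hA : 0 < A) (hT : 0 < T) (h32 : 32 ≤ A * T * θ ^ 2) :
    (1 / 2) * (12 / 5 : ℝ) ^ (1 / (2 * α)) * θ ^ (1 - 1 / α) *
        Real.log (A * T * θ ^ 2) ^ (1 / (2 * α))
      ≤ (θ / 2) ^ (1 - 1 / α) * Real.log (A * T * (θ / 2) ^ 2) ^ (1 / (2 * α)) ∧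
    θ ^ (1 - 1 / α) * Real.log (A * T * θ ^ 2) ^ (1 / (2 * α))
      < (θ / 2) ^ (1 - 1 / α) * Real.log (A * T * (θ / 2) ^ 2) ^ (1 / (2 * α)) ∧
    (6 / 5 : ℝ) < (1 / 2) * (12 / 5 : ℝ) ^ (1 / (2 * α)) := by
  obtain ⟨hα0, hα1⟩ := hα
  have hp : 1 < 1 / (2 * α) := by
    rw [lt_div_iff₀ (by linarith)]
    linarith
  have he : 1 - 1 / α = 1 - 2 * (1 / (2 * α)) := by
    field_simp
  rw [he, half_rpow_one_sub_two_mul hθ.1,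
    show A * T * (θ / 2) ^ 2 = A * T * θ ^ 2 / 4 by ring]
  generalize 1 / (2 * α) = p at hp
  generalize A * T * θ ^ 2 = x at h32
  have hlog : 0 < Real.log x := Real.log_pos (by linarith)
  have hθp : 0 < θ ^ (1 - 2 * p) := Real.rpow_pos_of_pos hθ.1 _
  have hlp : 0 < Real.log x ^ p := Real.rpow_pos_of_pos hlog _
  have hconst : (6 / 5 : ℝ) < 1 / 2 * (12 / 5 : ℝ) ^ p := by
    have h := Real.rpow_lt_rpow_of_exponent_lt (x := (12 / 5 : ℝ)) (by norm_num) hp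
    rw [Real.rpow_one] at h
    linarith
  have hmain : 1 / 2 * (12 / 5 : ℝ) ^ p * θ ^ (1 - 2 * p) * Real.log x ^ p
      ≤ 1 / 2 * (4 : ℝ) ^ p * θ ^ (1 - 2 * p) * Real.log (x / 4) ^ p := by
    calc 1 / 2 * (12 / 5 : ℝ) ^ p * θ ^ (1 - 2 * p) * Real.log x ^ p
        = 1 / 2 * (4 : ℝ) ^ p * θ ^ (1 - 2 * p) * (3 / 5 * Real.log x) ^ p := by
          rw [show (12 / 5 : ℝ) = 4 * (3 / 5) by norm_num,
            Real.mul_rpow (by norm_num) (by norm_num), Real.mul_rpow (by norm_num) hlog.le]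
          ring
      _ ≤ _ := by
          have h := Real.rpow_le_rpow (by positivity) (three_fifths_log_le_log_div_four h32)
            (zero_le_one.trans hp.le)
          gcongr
  refine ⟨hmain, lt_of_lt_of_le ?_ hmain, hconst⟩
  rw [mul_assoc _ (θ ^ (1 - 2 * p))]
  exact lt_mul_of_one_lt_left (mul_pos hθp hlp) (by linarith)
end
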